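/- arXiv:1610.05969 — 2 statements merged into one kernel-verified Lean document; each statement's English description precedes it below -/
import Mathlib

section
/- Plancherel–Rotach bulk estimate for the diagonal kernel: for every C > 0 and ε > 0 there exists a constant c > 0 such that for every integer N ≥ 1 and every τ ∈ (0, π/2] with N sin³τ ≥ C N^ε, setting y = √(2N) cos τ, one has | Σ_{k=0}^{N-1} ψ_k(y)² − (1/π)√(2N − y²) | ≤ c · √N / (2N − y²). -/
open Real MeasureTheory Filter Set

/-- Physicists' Hermite polynomial `H_n(x) = (-1)^n e^{x^2} (d/dx)^n e^{-x^2}`. -/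
noncomputable def hermiteP (n : ℕ) (x : ℝ) : ℝ :=
  (-1 : ℝ) ^ n * Real.exp (x ^ 2) * iteratedDeriv n (fun t => Real.exp (-t ^ 2)) x

/-- Oscillator wave function `ψ_n(x) = (√π 2^n n!)^{-1/2} e^{-x^2/2} H_n(x)`. -/
noncomputable def osc (n : ℕ) (x : ℝ) : ℝ :=
  (Real.sqrt (Real.sqrt Real.pi * 2 ^ n * (n.factorial : ℝ)))⁻¹ *
    Real.exp (-x ^ 2 / 2) * hermiteP n x

/-- The kernel `K^N(x,y) = Σ_{k=0}^{N-1} ψ_k(x) ψ_k(y)`. -/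
noncomputable def kerK (N : ℕ) (x y : ℝ) : ℝ :=
  ∑ k ∈ Finset.range N, osc k x * osc k y

/-- The rescaled kernel `L^N(x,y) = N^{-1/2} K^N(√N x, √N y)`. -/
noncomputable def kerL (N : ℕ) (x y : ℝ) : ℝ :=
  (Real.sqrt (N : ℝ))⁻¹ * kerK N (Real.sqrt (N : ℝ) * x) (Real.sqrt (N : ℝ) * y)


lemma pr_g_deriv (n : ℕ) (x : ℝ) :
    HasDerivAt (iteratedDeriv n (fun t : ℝ => Real.exp (-t ^ 2)))
      (iteratedDeriv (n + 1) (fun t : ℝ => Real.exp (-t ^ 2)) x) x := by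
  have hs : ContDiff ℝ (n + 1 : ℕ) (fun t : ℝ => Real.exp (-t ^ 2)) := by fun_prop
  rw [iteratedDeriv_succ]
  apply DifferentiableAt.hasDerivAt
  exact (hs.differentiable_iteratedDeriv n (by exact_mod_cast Nat.lt_succ_self n)) x

lemma pr_g_one (x : ℝ) :
    iteratedDeriv 1 (fun t : ℝ => Real.exp (-t ^ 2)) x = -2 * x * Real.exp (-x ^ 2) := by
  rw [iteratedDeriv_one]
  have h : HasDerivAt (fun t : ℝ => Real.exp (-t ^ 2)) (Real.exp (-x ^ 2) * (-(2 * x))) x := by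
    have := ((hasDerivAt_pow 2 x).neg).exp
    simpa using this
  rw [h.deriv]; ring

lemma pr_g_rec (n : ℕ) : ∀ x : ℝ,
    iteratedDeriv (n + 2) (fun t : ℝ => Real.exp (-t ^ 2)) x =
      -2 * x * iteratedDeriv (n + 1) (fun t : ℝ => Real.exp (-t ^ 2)) x
      - 2 * (n + 1) * iteratedDeriv n (fun t : ℝ => Real.exp (-t ^ 2)) x := by
  induction n with
  | zero =>
    intro x
    have h1 := pr_g_deriv 1 x
    have h0 := pr_g_deriv 0 x
    have he : iteratedDeriv 1 (fun t : ℝ => Real.exp (-t ^ 2)) =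
        fun x => -2 * x * iteratedDeriv 0 (fun t : ℝ => Real.exp (-t ^ 2)) x := by
      funext z; rw [pr_g_one]; simp
    rw [he] at h1
    have h2 := ((hasDerivAt_id x).const_mul (-2)).mul h0
    have := h1.unique h2
    simp only [id] at this
    simp only [zero_add] at this ⊢
    rw [show (0 + 2 : ℕ) = 1 + 1 from rfl] at *
    rw [this]; push_cast; ring
  | succ n ih =>
    intro x
    have h1 := pr_g_deriv (n + 2) x
    rw [show iteratedDeriv (n + 2) (fun t : ℝ => Real.exp (-t ^ 2)) = _ from funext ih] at h1
    have h2 := (((hasDerivAt_id x).const_mul (-2)).mul (pr_g_deriv (n + 1) x)).sub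
      ((pr_g_deriv n x).const_mul (2 * (n + 1 : ℝ)))
    have := h1.unique h2
    simp only [id] at this
    rw [show n + 1 + 2 = n + 2 + 1 from rfl, this]
    push_cast; ring

lemma osc_eq (n : ℕ) (x : ℝ) : osc n x =
    (Real.sqrt (Real.sqrt Real.pi * 2 ^ n * (n.factorial : ℝ)))⁻¹ * (-1) ^ n *
      (Real.exp (x ^ 2 / 2) * iteratedDeriv n (fun t : ℝ => Real.exp (-t ^ 2)) x) := by
  unfold osc hermiteP
  have : Real.exp (x ^ 2 / 2) = Real.exp (-x ^ 2 / 2) * Real.exp (x ^ 2) := by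
    rw [← Real.exp_add]; congr 1; ring
  rw [this]; ring

lemma pr_norm_succ (n : ℕ) :
    (Real.sqrt (Real.sqrt Real.pi * 2 ^ n * (n.factorial : ℝ)))⁻¹ =
    Real.sqrt (2 * (n + 1)) *
    (Real.sqrt (Real.sqrt Real.pi * 2 ^ (n + 1) * ((n + 1).factorial : ℝ)))⁻¹ := by
  have h : Real.sqrt Real.pi * 2 ^ (n + 1) * ((n + 1).factorial : ℝ) =
      (2 * (n + 1)) * (Real.sqrt Real.pi * 2 ^ n * (n.factorial : ℝ)) := by
    rw [Nat.factorial_succ]; push_cast; ring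
  rw [h, Real.sqrt_mul (x := 2 * ((n : ℝ) + 1)) (by positivity), mul_inv, ← mul_assoc]
  have : 0 < Real.sqrt (2 * ((n : ℝ) + 1)) := by positivity
  rw [mul_inv_cancel₀ this.ne', one_mul]

lemma osc_deriv (n : ℕ) (x : ℝ) :
    HasDerivAt (osc n) (x * osc n x - Real.sqrt (2 * (n + 1)) * osc (n + 1) x) x := by
  have hE : HasDerivAt (fun t : ℝ => Real.exp (t ^ 2 / 2)) (Real.exp (x ^ 2 / 2) * x) x := by
    have := ((hasDerivAt_pow 2 x).div_const 2).exp
    convert this using 1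
    simp
  have h := (hE.mul (pr_g_deriv n x)).const_mul
    ((Real.sqrt (Real.sqrt Real.pi * 2 ^ n * (n.factorial : ℝ)))⁻¹ * (-1) ^ n)
  rw [show osc n = _ from funext (osc_eq n)]
  refine HasDerivAt.congr_deriv h ?_
  rw [osc_eq (n + 1), pr_norm_succ n]
  ring

lemma osc_rec (n : ℕ) (x : ℝ) :
    Real.sqrt (2 * (n + 2)) * osc (n + 2) x =
      2 * x * osc (n + 1) x - Real.sqrt (2 * (n + 1)) * osc n x := by
  rw [osc_eq, osc_eq, osc_eq, pr_norm_succ n, pr_norm_succ (n + 1), pr_g_rec]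
  have h1 : Real.sqrt (2 * ((n : ℝ) + 1)) ^ 2 = 2 * (n + 1) := Real.sq_sqrt (by positivity)
  have h2 : ((n + 1 : ℕ) : ℝ) + 1 = n + 2 := by push_cast; ring
  rw [h2, show n + 1 + 1 = n + 2 from rfl]
  rw [show (-1 : ℝ) ^ (n + 2) = (-1) ^ n by ring, show (-1 : ℝ) ^ (n + 1) = -(-1) ^ n by ring]
  generalize Real.sqrt (2 * ((n : ℝ) + 1)) = s at *
  linear_combination (√(2 * ((n : ℝ) + 2)) * (√(√π * 2 ^ (n + 2) * ↑(n + 2).factorial))⁻¹ * (-1) ^ n * rexp (x ^ 2 / 2) *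
    iteratedDeriv n (fun t : ℝ => Real.exp (-t ^ 2)) x) * h1

lemma osc_one (x : ℝ) : osc 1 x = Real.sqrt 2 * x * osc 0 x := by
  rw [osc_eq, osc_eq, pr_norm_succ 0, pr_g_one]
  have h1 : Real.sqrt 2 ^ 2 = 2 := Real.sq_sqrt (by positivity)
  simp only [iteratedDeriv_zero]
  have h0 : (0 : ℝ) < Real.sqrt 2 := by positivity
  norm_num
  generalize Real.sqrt 2 = s at *
  field_simp
  linear_combination (-x : ℝ) * h1

lemma osc_kernel (n : ℕ) (x : ℝ) :
    ∑ k ∈ Finset.range (n + 1), osc k x ^ 2 =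
      (n + 1) * (osc n x ^ 2 + osc (n + 1) x ^ 2)
        - Real.sqrt (2 * (n + 1)) * x * osc n x * osc (n + 1) x := by
  induction n with
  | zero =>
    have h1 : Real.sqrt 2 ^ 2 = 2 := Real.sq_sqrt (by positivity)
    simp [osc_one]
    generalize Real.sqrt 2 = s at *
    linear_combination (0 : ℝ) * h1 
  | succ n ih =>
    rw [Finset.sum_range_succ, ih]
    have h1 : Real.sqrt (2 * ((n : ℝ) + 1)) ^ 2 = 2 * (n + 1) := Real.sq_sqrt (by positivity)
    have h2 : Real.sqrt (2 * ((n : ℝ) + 2)) ^ 2 = 2 * (n + 2) := Real.sq_sqrt (by positivity)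
    have hr := osc_rec n x
    have hc : ((n + 1 : ℕ) : ℝ) + 1 = n + 2 := by push_cast; ring
    rw [hc, show n + 1 + 1 = n + 2 from rfl]
    generalize Real.sqrt (2 * ((n : ℝ) + 1)) = s at *
    generalize Real.sqrt (2 * ((n : ℝ) + 2)) = r at *
    generalize osc n x = a at *
    generalize osc (n + 1) x = b at *
    generalize osc (n + 2) x = d at *
    have e : ((n : ℝ) + 2) = r ^ 2 / 2 := by linarith
    have e' : ((n : ℝ) + 1) = s ^ 2 / 2 := by linarith
    have e3 : r ^ 2 = s ^ 2 + 2 := by linarith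
    rw [e, e']
    linear_combination (-(r * d) / 2 - (2 * x * b - s * a) / 2 + x * b) * hr - b ^ 2 / 2 * e3

/-- the derivative of `osc (n+1)` -/
noncomputable def oscD (n : ℕ) (x : ℝ) : ℝ :=
  -x * osc (n + 1) x + Real.sqrt (2 * (n + 1)) * osc n x

lemma osc_succ_deriv (n : ℕ) (x : ℝ) : HasDerivAt (osc (n + 1)) (oscD n x) x := by
  have h := osc_deriv (n + 1) x
  convert h using 1
  have hr := osc_rec n x
  have hc : ((n + 1 : ℕ) : ℝ) + 1 = n + 2 := by push_cast; ring
  rw [hc, show n + 1 + 1 = n + 2 from rfl]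
  unfold oscD
  linarith

lemma oscD_deriv (n : ℕ) (x : ℝ) :
    HasDerivAt (oscD n) ((x ^ 2 - 2 * (n + 1) - 1) * osc (n + 1) x) x := by
  have h := (((hasDerivAt_id x).neg).mul (osc_succ_deriv n x)).add
    ((osc_deriv n x).const_mul (Real.sqrt (2 * (n + 1))))
  have h1 : Real.sqrt (2 * ((n : ℝ) + 1)) ^ 2 = 2 * (n + 1) := Real.sq_sqrt (by positivity)
  refine HasDerivAt.congr_deriv h ?_
  simp only [id, oscD, Pi.neg_apply]
  linear_combination (-osc (n + 1) x) * h1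

lemma osc_kernel' (n : ℕ) (x : ℝ) :
    ∑ k ∈ Finset.range (n + 1), osc k x ^ 2 =
      (oscD n x ^ 2 + (2 * (n + 1) - x ^ 2) * osc (n + 1) x ^ 2) / 2 := by
  have h1 : Real.sqrt (2 * ((n : ℝ) + 1)) ^ 2 = 2 * (n + 1) := Real.sq_sqrt (by positivity)
  rw [osc_kernel, oscD]
  linear_combination (-(osc n x) ^ 2 / 2) * h1

lemma osc_zero_even (m : ℕ) :
    osc (2 * m) 0 ^ 4 * (π * Real.Wallis.W m * (2 * m + 1)) = 1 ∧ osc (2 * m + 1) 0 = 0 := by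
  induction m with
  | zero =>
    constructor
    · have : Real.sqrt (Real.sqrt π) ^ 4 = π := by
        rw [show (4 : ℕ) = 2 * 2 from rfl, pow_mul, Real.sq_sqrt (by positivity),
          Real.sq_sqrt (by positivity)]
      simp [osc_eq, Real.Wallis.W, this]
    · simp [osc_one]
  | succ m ih =>
    obtain ⟨ih1, ih2⟩ := ih
    have r1 := osc_rec (2 * m) 0
    have r2 := osc_rec (2 * m + 1) 0
    constructor
    · rw [show 2 * (m + 1) = 2 * m + 2 by ring, Real.Wallis.W_succ]
      have h1 : Real.sqrt (2 * (((2 * m : ℕ) : ℝ) + 1)) ^ 2 = 2 * (2 * m + 1) := by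
        rw [Real.sq_sqrt (by positivity)]; push_cast; ring
      have h2 : Real.sqrt (2 * (((2 * m : ℕ) : ℝ) + 2)) ^ 2 = 2 * (2 * m + 2) := by
        rw [Real.sq_sqrt (by positivity)]; push_cast; ring
      simp only [mul_zero, zero_mul, zero_sub] at r1
      generalize Real.sqrt (2 * (((2 * m : ℕ) : ℝ) + 1)) = s at *
      generalize Real.sqrt (2 * (((2 * m : ℕ) : ℝ) + 2)) = r at *
      generalize osc (2 * m) 0 = a at *
      generalize osc (2 * m + 2) 0 = b at *
      have e : r ^ 2 * b ^ 2 = s ^ 2 * a ^ 2 := by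
        rw [← mul_pow, ← mul_pow, r1]; ring
      rw [h1, h2] at e
      have e2 : b ^ 2 = (2 * m + 1) / (2 * m + 2) * a ^ 2 := by
        field_simp; linarith
      refine Eq.trans ?_ ih1
      rw [show b ^ 4 = (b ^ 2) ^ 2 by ring, e2]
      push_cast
      rw [show (2 : ℝ) * (m + 1) + 1 = 2 * m + 3 by ring]
      clear ih1
      generalize Real.Wallis.W m = w
      field_simp
    · rw [ih2] at r2
      simp only [mul_zero, zero_mul, zero_sub, neg_zero] at r2
      rw [show 2 * (m + 1) + 1 = 2 * m + 1 + 2 by ring]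
      rcases mul_eq_zero.mp r2 with h | h
      · exfalso
        have : 0 < Real.sqrt (2 * (((2 * m + 1 : ℕ) : ℝ) + 2)) := by positivity
        linarith
      · exact h

/-- Energy lemma for the oscillator ODE. -/
lemma pr_energy (A : ℝ) (hA : 0 < A) (u v : ℝ → ℝ)
    (hu : ∀ x, HasDerivAt u (v x) x)
    (hv : ∀ x, HasDerivAt v ((x ^ 2 - A - 1) * u x) x)
    (E B : ℝ → ℝ)
    (hE : E = fun t => (v t ^ 2 + (A - t ^ 2) * u t ^ 2) / 2 / Real.sqrt (A - t ^ 2))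
    (hB : B = fun t => 1 / Real.sqrt (A - t ^ 2) ^ 2 + t / (2 * Real.sqrt (A - t ^ 2) ^ 3))
    (y : ℝ) (hy0 : 0 ≤ y) (hy : y ^ 2 < A) (hBy : B y ≤ 1 / 4) :
    |E y - E 0| ≤ 4 * E 0 * B y := by
  set p : ℝ → ℝ := fun t => Real.sqrt (A - t ^ 2) with hp
  have hlt : ∀ t ∈ Icc 0 y, 0 < A - t ^ 2 := by
    intro t ht
    have : t ^ 2 ≤ y ^ 2 := by have := ht.1; have := ht.2; gcongr
    linarith
  have hpp : ∀ t ∈ Icc 0 y, 0 < p t := fun t ht => Real.sqrt_pos.mpr (hlt t ht)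
  have hpsq : ∀ t ∈ Icc 0 y, p t ^ 2 = A - t ^ 2 := fun t ht => Real.sq_sqrt (hlt t ht).le
  have hpd : ∀ t ∈ Icc 0 y, HasDerivAt p (-t / p t) t := by
    intro t ht
    have h := (((hasDerivAt_pow 2 t).const_sub A)).sqrt (hlt t ht).ne'
    convert h using 1
    have := hpp t ht
    simp only [hp] at this ⊢
    field_simp
    norm_num
    ring
  have hEt : ∀ t ∈ Icc 0 y, E t = (v t ^ 2 + p t ^ 2 * u t ^ 2) / (2 * p t) := by
    intro t ht
    rw [hE, hpsq t ht]; simp only [hp]; field_simp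
  have hBt : ∀ t, B t = 1 / p t ^ 2 + t / (2 * p t ^ 3) := by
    intro t; rw [hB]
  set F : ℝ → ℝ := fun t => (v t ^ 2 + p t ^ 2 * u t ^ 2) / (2 * p t) + u t ^ 2 / (2 * p t)
    - t * u t * v t / (2 * p t ^ 3) with hF
  have hFd : ∀ t ∈ Icc 0 y, HasDerivAt F
      (t * u t ^ 2 / p t ^ 3 - (1 / (2 * p t ^ 3) + 3 * t ^ 2 / (2 * p t ^ 5)) * (u t * v t)) t := by
    intro t ht
    have h0 := hpp t ht
    have d1 := hpd t ht
    have h2p : (2 * p t) ≠ 0 := by positivity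
    have h2p3 : (2 * p t ^ 3) ≠ 0 := by positivity
    have h := (((((hv t).pow 2).add ((d1.pow 2).mul ((hu t).pow 2))).div (d1.const_mul 2) h2p).add
      (((hu t).pow 2).div (d1.const_mul 2) h2p)).sub
      ((((hasDerivAt_id t).mul (hu t)).mul (hv t)).div ((d1.pow 3).const_mul 2) h2p3)
    refine HasDerivAt.congr_deriv h ?_
    have hA' : A = p t ^ 2 + t ^ 2 := by rw [hpsq t ht]; ring
    simp only [Pi.mul_apply, Pi.add_apply, Pi.pow_apply, id]
    generalize p t = q at *
    rw [hA']
    field_simp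
    push_cast
    ring
  have hBd : ∀ t ∈ Icc 0 y, HasDerivAt B
      (2 * t / p t ^ 4 + 1 / (2 * p t ^ 3) + 3 * t ^ 2 / (2 * p t ^ 5)) t := by
    intro t ht
    have h0 := hpp t ht
    have d1 := hpd t ht
    have h2p : (p t ^ 2) ≠ 0 := by positivity
    have h2p3 : (2 * p t ^ 3) ≠ 0 := by positivity
    have h := ((hasDerivAt_const t (1 : ℝ)).div (d1.pow 2) h2p).add
      ((hasDerivAt_id t).div ((d1.pow 3).const_mul 2) h2p3)
    rw [show B = _ from funext hBt]
    refine HasDerivAt.congr_deriv h ?_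
    simp only [Pi.pow_apply, id]
    generalize p t = q at *
    field_simp
    push_cast
    ring
  have hu2 : ∀ t ∈ Icc 0 y, u t ^ 2 ≤ 2 * E t / p t := by
    intro t ht
    have h0 := hpp t ht
    rw [hEt t ht, le_div_iff₀ h0]
    rw [show 2 * ((v t ^ 2 + p t ^ 2 * u t ^ 2) / (2 * p t)) = (v t ^ 2 + p t ^ 2 * u t ^ 2) / p t by
      field_simp, le_div_iff₀ h0]
    nlinarith [sq_nonneg (v t)]
  have huv : ∀ t ∈ Icc 0 y, |u t * v t| ≤ E t := by
    intro t ht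
    have h0 := hpp t ht
    rw [hEt t ht, le_div_iff₀ (by positivity), ← abs_of_pos h0, abs_of_pos (show 0 < 2 * |p t| by positivity)
      |>.symm, ← abs_mul, abs_of_pos h0, abs_le]
    constructor
    · nlinarith [sq_nonneg (v t + p t * u t)]
    · nlinarith [sq_nonneg (v t - p t * u t)]
  have hE0 : ∀ t ∈ Icc 0 y, 0 ≤ E t := fun t ht => (abs_nonneg _).trans (huv t ht)
  have hB0 : ∀ t ∈ Icc 0 y, 0 ≤ B t := by
    intro t ht
    have h0 := hpp t ht
    have := ht.1
    rw [hBt]; positivity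
  have hFE : ∀ t ∈ Icc 0 y, |F t - E t| ≤ E t * B t := by
    intro t ht
    have h0 := hpp t ht
    have ht0 := ht.1
    rw [hEt t ht, hBt, hF]
    simp only
    rw [← hEt t ht]
    have e1 : u t ^ 2 / (2 * p t) ≤ E t * (1 / p t ^ 2) := by
      calc u t ^ 2 / (2 * p t) ≤ (2 * E t / p t) / (2 * p t) := by gcongr; exact hu2 t ht
        _ = _ := by field_simp
    have e1' : 0 ≤ u t ^ 2 / (2 * p t) := by positivity
    have e2 : |t * u t * v t / (2 * p t ^ 3)| ≤ E t * (t / (2 * p t ^ 3)) := by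
      rw [show t * u t * v t / (2 * p t ^ 3) = (t / (2 * p t ^ 3)) * (u t * v t) by ring, abs_mul,
        abs_of_nonneg (show 0 ≤ t / (2 * p t ^ 3) by positivity), mul_comm]
      gcongr
      exact huv t ht
    rw [abs_le] at e2 ⊢
    constructor <;> linarith [e2.1, e2.2]
  have hEc : ContinuousOn E (Icc 0 y) := by
    have : ContinuousOn (fun t => (v t ^ 2 + p t ^ 2 * u t ^ 2) / (2 * p t)) (Icc 0 y) := by
      intro t ht
      have h0 := hpp t ht
      have c1 := (hpd t ht).continuousAt
      have c2 := (hu t).continuousAt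
      have c3 := (hv t).continuousAt
      exact (((c3.pow 2).add ((c1.pow 2).mul (c2.pow 2))).div (c1.const_mul 2)
        (by positivity)).continuousWithinAt
    exact this.congr hEt
  have h0m : (0 : ℝ) ∈ Icc 0 y := ⟨le_rfl, hy0⟩
  have hym : y ∈ Icc 0 y := ⟨hy0, le_rfl⟩
  obtain ⟨s, hs, hmax⟩ := isCompact_Icc.exists_isMaxOn ⟨0, h0m⟩ hEc
  have hM : ∀ t ∈ Icc 0 y, E t ≤ E s := fun t ht => hmax ht
  have hMs := hE0 s hs
  obtain ⟨M, hMdef⟩ : ∃ M, M = E s := ⟨_, rfl⟩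
  rw [← hMdef] at hMs
  simp only [← hMdef] at hM
  have hbound : ∀ t ∈ Icc 0 y,
      |t * u t ^ 2 / p t ^ 3 - (1 / (2 * p t ^ 3) + 3 * t ^ 2 / (2 * p t ^ 5)) * (u t * v t)| ≤
       M * (2 * t / p t ^ 4 + 1 / (2 * p t ^ 3) + 3 * t ^ 2 / (2 * p t ^ 5)) := by
    intro t ht
    have h0 := hpp t ht
    have ht0 := ht.1
    have e1 : |t * u t ^ 2 / p t ^ 3| ≤ M * (2 * t / p t ^ 4) := by
      rw [abs_of_nonneg (by positivity)]
      calc t * u t ^ 2 / p t ^ 3 ≤ t * (2 * M / p t) / p t ^ 3 := by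
            gcongr
            refine (hu2 t ht).trans ?_
            gcongr; exact hM t ht
        _ = _ := by field_simp
    have e2 : |(1 / (2 * p t ^ 3) + 3 * t ^ 2 / (2 * p t ^ 5)) * (u t * v t)| ≤
        M * (1 / (2 * p t ^ 3) + 3 * t ^ 2 / (2 * p t ^ 5)) := by
      rw [abs_mul, abs_of_nonneg (by positivity), mul_comm]
      gcongr
      exact (huv t ht).trans (hM t ht)
    rw [abs_le] at e1 e2 ⊢
    constructor <;> linarith [e1.1, e1.2, e2.1, e2.2]
  have hFF : ∀ t ∈ Icc 0 y, |F t - F 0| ≤ M * (B t - B 0) := by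
    intro t ht
    have := image_norm_le_of_norm_deriv_right_le_deriv_boundary' (a := 0) (b := y)
      (f := fun t => F t - F 0) (B := fun t => M * (B t - B 0))
      (fun t ht => ((hFd t ht).sub_const (F 0)).continuousAt.continuousWithinAt)
      (fun t ht => ((hFd t ⟨ht.1, ht.2.le⟩).sub_const (F 0)).hasDerivWithinAt)
      (by simp)
      (fun t ht => (((hBd t ht).sub_const (B 0)).const_mul M).continuousAt.continuousWithinAt)
      (fun t ht => (((hBd t ⟨ht.1, ht.2.le⟩).sub_const (B 0)).const_mul M).hasDerivWithinAt)
      (fun t ht => hbound t ⟨ht.1, ht.2.le⟩) ht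
    simpa using this
  have hBmono : ∀ t ∈ Icc 0 y, B t ≤ B y := by
    have hm : MonotoneOn B (Icc 0 y) := by
      apply monotoneOn_of_deriv_nonneg (convex_Icc 0 y)
      · exact fun t ht => (hBd t ht).continuousAt.continuousWithinAt
      · intro t ht
        exact (hBd t (interior_subset ht)).differentiableAt.differentiableWithinAt
      · intro t ht
        have ht' := interior_subset ht
        rw [(hBd t ht').deriv]
        have h0 := hpp t ht'
        have := ht'.1
        positivity
    exact fun t ht => hm ht hym ht.2
  have hEE : ∀ t ∈ Icc 0 y, |E t - E 0| ≤ 2 * M * B y := by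
    intro t ht
    have a1 := (hFE t ht).trans (mul_le_mul_of_nonneg_right (hM t ht) (hB0 t ht))
    have a2 := (hFE 0 h0m).trans (mul_le_mul_of_nonneg_right (hM 0 h0m) (hB0 0 h0m))
    have a3 := hFF t ht
    have a4 := mul_le_mul_of_nonneg_left (hBmono t ht) hMs
    rw [abs_le] at *
    constructor <;> linarith [a1.1, a1.2, a2.1, a2.2, a3.1, a3.2]
  have hM2 : M ≤ 2 * E 0 := by
    have := (abs_le.mp (hEE s hs)).2
    rw [← hMdef] at this
    nlinarith
  have := hEE y hym
  have h3 := mul_le_mul_of_nonneg_right hM2 (hB0 y hym)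
  linarith

lemma pr_wallis (m N : ℕ) (hN : 1 ≤ N) (hm : N = 2 * m ∨ N = 2 * m + 1) (X : ℝ) (hX : 0 ≤ X)
    (h : X ^ 2 * (2 * Real.Wallis.W m * (2 * m + 1)) = π * N) : |X - 1| ≤ 1 / N := by
  have h1 := Real.Wallis.W_le m
  have h2 := Real.Wallis.le_W m
  have hpi := Real.pi_pos
  have hN' : (1 : ℝ) ≤ N := by exact_mod_cast hN
  generalize Real.Wallis.W m = w at *
  have hm0 : (0 : ℝ) ≤ m := by positivity
  have l1 : (N : ℝ) ≤ X ^ 2 * (2 * m + 1) := by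
    have : π * N ≤ π * (X ^ 2 * (2 * m + 1)) := by
      rw [← h]
      have : X ^ 2 * (2 * m + 1) * w ≤ X ^ 2 * (2 * m + 1) * (π / 2) := by gcongr
      linarith
    exact le_of_mul_le_mul_left this hpi
  have l2 : X ^ 2 * (2 * m + 1) ^ 2 ≤ N * (2 * m + 2) := by
    have h3 : (2 * (m : ℝ) + 1) * (π / 2) ≤ w * (2 * m + 2) := by
      rwa [div_mul_eq_mul_div, div_le_iff₀ (by positivity)] at h2
    have : π * (X ^ 2 * (2 * m + 1) ^ 2) ≤ π * (N * (2 * m + 2)) := by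
      rw [← mul_assoc π (N : ℝ), ← h]
      have : X ^ 2 * (2 * m + 1) * ((2 * (m : ℝ) + 1) * (π / 2)) ≤
        X ^ 2 * (2 * m + 1) * (w * (2 * m + 2)) := by gcongr
      linarith
    exact le_of_mul_le_mul_left this hpi
  have a1 : 1 - 1 / (N : ℝ) ≤ X ^ 2 := by
    rcases hm with hm | hm
    · have e : (N : ℝ) = 2 * m := by rw [hm]; push_cast; ring
      have e2 : (2 * (m : ℝ) + 1) = N + 1 := by rw [e]
      rw [e2] at l1
      have : (N : ℝ) / (N + 1) ≤ X ^ 2 := by rwa [div_le_iff₀ (by positivity)]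
      refine le_trans ?_ this
      rw [le_div_iff₀ (by positivity)]
      have : 0 < 1 / (N : ℝ) := by positivity
      have h4 : 1 / (N : ℝ) * N = 1 := by field_simp
      nlinarith
    · have e : (N : ℝ) = 2 * m + 1 := by rw [hm]; push_cast; ring
      rw [← e] at l1
      have : 1 ≤ X ^ 2 := by
        by_contra hh
        push Not at hh
        nlinarith
      have : 0 < 1 / (N : ℝ) := by positivity
      linarith
  have a2 : X ^ 2 ≤ 1 + 1 / (N : ℝ) := by
    rcases hm with hm | hm
    · have e : (N : ℝ) = 2 * m := by rw [hm]; push_cast; ring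
      rw [← e] at l2
      have : X ^ 2 ≤ 1 := by
        by_contra hh
        push Not at hh
        have : 1 * ((N : ℝ) + 1) ^ 2 ≤ X ^ 2 * ((N : ℝ) + 1) ^ 2 := by gcongr
        nlinarith
      have : 0 < 1 / (N : ℝ) := by positivity
      linarith
    · have e : (N : ℝ) = 2 * m + 1 := by rw [hm]; push_cast; ring
      rw [show (2 * (m : ℝ) + 2) = N + 1 by rw [e]; ring, ← e] at l2
      have : X ^ 2 ≤ N * (N + 1) / (N : ℝ) ^ 2 := by rwa [le_div_iff₀ (by positivity)]
      refine this.trans (le_of_eq ?_)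
      field_simp
  rw [abs_le]
  have : 0 < 1 / (N : ℝ) := by positivity
  rcases le_total X 1 with hx | hx
  · constructor <;> nlinarith
  · constructor <;> nlinarith

lemma pr_zero (n : ℕ) :
    |π * ((∑ k ∈ Finset.range (n + 1), osc k 0 ^ 2) / Real.sqrt (2 * (n + 1))) - 1|
      ≤ 1 / ((n : ℝ) + 1) := by
  have hR : Real.sqrt (2 * ((n : ℝ) + 1)) ^ 2 = 2 * (n + 1) := Real.sq_sqrt (by positivity)
  have hR0 : 0 < Real.sqrt (2 * ((n : ℝ) + 1)) := by positivity
  have key : ∃ m : ℕ, (n + 1 = 2 * m ∨ n + 1 = 2 * m + 1) ∧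
      osc n 0 ^ 2 + osc (n + 1) 0 ^ 2 = osc (2 * m) 0 ^ 2 := by
    rcases Nat.even_or_odd' n with ⟨m, hm | hm⟩
    · refine ⟨m, Or.inr (by omega), ?_⟩
      rw [hm, (osc_zero_even m).2]; ring
    · refine ⟨m + 1, Or.inl (by omega), ?_⟩
      rw [hm, (osc_zero_even m).2]; ring_nf
  obtain ⟨m, hm, hk⟩ := key
  have hw := (osc_zero_even m).1
  have := pr_wallis m (n + 1) (by omega) hm
    (π * ((∑ k ∈ Finset.range (n + 1), osc k 0 ^ 2) / Real.sqrt (2 * (n + 1))))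
    (by have := Real.pi_pos; positivity) ?_
  · simpa using this
  · rw [osc_kernel, hk, mul_pow, div_pow, hR]
    simp only [mul_zero, zero_mul, sub_zero]
    push_cast
    generalize osc (2 * m) 0 = q at *
    field_simp
    linear_combination hw

lemma pr_large (n : ℕ) (τ : ℝ) (h0 : 0 < τ) (h1 : τ ≤ π / 2)
    (h : 3 ≤ ((n : ℝ) + 1) * Real.sin τ ^ 3) :
    |(∑ k ∈ Finset.range (n + 1), osc k (Real.sqrt (2 * ((n : ℝ) + 1)) * Real.cos τ) ^ 2) -
      (1 / Real.pi) * (Real.sqrt (2 * ((n : ℝ) + 1)) * Real.sin τ)| ≤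
      20 * Real.sqrt ((n : ℝ) + 1) / (Real.sqrt (2 * ((n : ℝ) + 1)) * Real.sin τ) ^ 2 := by
  have hz := pr_zero n
  have hR2 : Real.sqrt (2 * ((n : ℝ) + 1)) ^ 2 = 2 * (n + 1) := Real.sq_sqrt (by positivity)
  have hR0 : 0 < Real.sqrt (2 * ((n : ℝ) + 1)) := by positivity
  have hRs : Real.sqrt (2 * ((n : ℝ) + 1)) = Real.sqrt 2 * Real.sqrt ((n : ℝ) + 1) :=
    Real.sqrt_mul (by norm_num) _
  have hs0 : 0 < Real.sin τ := Real.sin_pos_of_pos_of_lt_pi h0 (by linarith [Real.pi_pos])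
  have hs1 : Real.sin τ ≤ 1 := Real.sin_le_one τ
  have hc0 : 0 ≤ Real.cos τ := Real.cos_nonneg_of_neg_pi_div_two_le_of_le (by linarith) h1
  have hc1 : Real.cos τ ≤ 1 := Real.cos_le_one τ
  have hcs := Real.sin_sq_add_cos_sq τ
  have hpi := Real.pi_pos
  have hpi3 := Real.pi_gt_three
  set R := Real.sqrt (2 * ((n : ℝ) + 1)) with hRdef
  set s := Real.sin τ
  have hyp : 2 * ((n : ℝ) + 1) - (R * Real.cos τ) ^ 2 = (R * s) ^ 2 := by
    rw [mul_pow, mul_pow, hR2]; linear_combination (-(2 * ((n : ℝ) + 1))) * hcs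
  have hsq : Real.sqrt (2 * ((n : ℝ) + 1) - (R * Real.cos τ) ^ 2) = R * s := by
    rw [hyp, Real.sqrt_sq (by positivity)]
  have hen := pr_energy (2 * ((n : ℝ) + 1)) (by positivity) (osc (n + 1)) (oscD n)
    (osc_succ_deriv n) (oscD_deriv n) _ _ rfl rfl (R * Real.cos τ) (by positivity)
    (by have : 0 < (R * s) ^ 2 := by positivity
        linarith)
  simp only [← osc_kernel'] at hen
  rw [hsq] at hen
  simp only [ne_eq, OfNat.ofNat_ne_zero, not_false_eq_true, zero_pow, sub_zero] at hen
  rw [← hRdef] at hen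
  set K := ∑ k ∈ Finset.range (n + 1), osc k (R * Real.cos τ) ^ 2
  set K0 := (∑ k ∈ Finset.range (n + 1), osc k 0 ^ 2) / R
  -- the small parameter
  obtain ⟨δ, hδ⟩ : ∃ δ, δ = R / (R * s) ^ 3 := ⟨_, rfl⟩
  have hδ0 : 0 < δ := by rw [hδ]; positivity
  have hδ' : δ = 1 / (2 * ((n + 1) * s ^ 3)) := by
    rw [hδ, show (R * s) ^ 3 = R * (R ^ 2) * s ^ 3 by ring, hR2]; field_simp
  have hδ6 : δ ≤ 1 / 6 := by
    rw [hδ']; apply one_div_le_one_div_of_le <;> linarith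
  have hδN : 1 / ((n : ℝ) + 1) ≤ 2 * δ := by
    rw [hδ', show 2 * (1 / (2 * (((n : ℝ) + 1) * s ^ 3))) = 1 / (((n : ℝ) + 1) * s ^ 3) by field_simp]
    apply one_div_le_one_div_of_le (by positivity)
    have : s ^ 3 ≤ 1 := pow_le_one₀ hs0.le hs1
    have hn : (0 : ℝ) ≤ n + 1 := by positivity
    nlinarith
  have hB : 1 / (R * s) ^ 2 + R * Real.cos τ / (2 * (R * s) ^ 3) ≤ 3 / 2 * δ := by
    have b1 : 1 / (R * s) ^ 2 ≤ δ := by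
      rw [hδ, show 1 / (R * s) ^ 2 = (R * s) / (R * s) ^ 3 by field_simp]
      gcongr
      nlinarith
    have b2 : R * Real.cos τ / (2 * (R * s) ^ 3) ≤ δ / 2 := by
      rw [hδ, show R / (R * s) ^ 3 / 2 = R / (2 * (R * s) ^ 3) by field_simp]
      gcongr
      nlinarith
    linarith
  have hen2 := hen (by linarith)
  have hK0 : 0 ≤ K0 := by positivity
  have hen3 : |K / (R * s) - K0| ≤ 4 * K0 * (3 / 2 * δ) :=
    hen2.trans (by gcongr)
  have hn1 : 1 / ((n : ℝ) + 1) ≤ 1 := by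
    rw [div_le_one (by positivity)]; have : (0 : ℝ) ≤ n := by positivity
    linarith
  have hz1 := abs_le.mp hz
  have hK2 : π * K0 ≤ 2 := by linarith [hz1.2]
  have hfin : |π * (K / (R * s)) - 1| ≤ 14 * δ := by
    have e1 : |π * (K / (R * s)) - π * K0| ≤ 12 * δ := by
      rw [← mul_sub, abs_mul, abs_of_pos hpi]
      calc π * |K / (R * s) - K0| ≤ π * (4 * K0 * (3 / 2 * δ)) := by gcongr
        _ = (π * K0) * (6 * δ) := by ring
        _ ≤ 2 * (6 * δ) := by gcongr
        _ = _ := by ring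
    rw [abs_le] at *
    constructor <;> linarith [e1.1, e1.2]
  have hp : 0 < R * s := by positivity
  have e : K - 1 / π * (R * s) = (R * s) / π * (π * (K / (R * s)) - 1) := by
    field_simp
  rw [e, abs_mul, abs_of_pos (by positivity)]
  have hs2 : Real.sqrt 2 ≤ 3 / 2 := by
    rw [Real.sqrt_le_left (by norm_num)]; norm_num
  calc R * s / π * |π * (K / (R * s)) - 1| ≤ R * s / π * (14 * δ) := by gcongr
    _ = (14 * Real.sqrt 2 / π) * Real.sqrt ((n : ℝ) + 1) / (R * s) ^ 2 := by
        rw [hδ]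
        have : R / (R * s) ^ 3 = Real.sqrt 2 * Real.sqrt ((n : ℝ) + 1) / (R * s) ^ 3 := by rw [← hRs]
        rw [this]
        generalize R * s = p at *
        field_simp
    _ ≤ 20 * Real.sqrt ((n : ℝ) + 1) / (R * s) ^ 2 := by
        gcongr
        rw [div_le_iff₀ hpi]
        linarith

lemma pr_small (N : ℕ) : ∃ b : ℝ, ∀ τ : ℝ,
    |(∑ k ∈ Finset.range N, osc k (Real.sqrt (2 * (N : ℝ)) * Real.cos τ) ^ 2) -
          (1 / Real.pi) *
            Real.sqrt (2 * (N : ℝ) - (Real.sqrt (2 * (N : ℝ)) * Real.cos τ) ^ 2)| ≤ b := by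
  have hc : ∀ k, Continuous (osc k) := fun k =>
    continuous_iff_continuousAt.mpr fun x => (osc_deriv k x).continuousAt
  have hcont : ContinuousOn (fun c : ℝ =>
      (∑ k ∈ Finset.range N, osc k (Real.sqrt (2 * (N : ℝ)) * c) ^ 2) -
          (1 / Real.pi) *
            Real.sqrt (2 * (N : ℝ) - (Real.sqrt (2 * (N : ℝ)) * c) ^ 2)) (Icc (-1) 1) := by
    apply Continuous.continuousOn
    have := fun k => (hc k).comp (continuous_const.mul continuous_id : Continuous fun c : ℝ => Real.sqrt (2 * (N : ℝ)) * c)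
    refine (continuous_finset_sum _ fun k _ => (this k).pow 2).sub ?_
    fun_prop
  obtain ⟨b, hb⟩ := isCompact_Icc.exists_bound_of_continuousOn hcont
  exact ⟨b, fun τ => hb (Real.cos τ) ⟨Real.neg_one_le_cos τ, Real.cos_le_one τ⟩⟩

/-- Plancherel–Rotach bulk estimate for the diagonal kernel. -/
theorem plancherel_rotach_bulk (C ε : ℝ) (hC : 0 < C) (hε : 0 < ε) :
    ∃ c : ℝ, 0 < c ∧ ∀ N : ℕ, 1 ≤ N → ∀ τ : ℝ, 0 < τ → τ ≤ Real.pi / 2 →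
      C * (N : ℝ) ^ ε ≤ (N : ℝ) * Real.sin τ ^ 3 →
      |(∑ k ∈ Finset.range N, osc k (Real.sqrt (2 * (N : ℝ)) * Real.cos τ) ^ 2) -
          (1 / Real.pi) *
            Real.sqrt (2 * (N : ℝ) - (Real.sqrt (2 * (N : ℝ)) * Real.cos τ) ^ 2)| ≤
        c * Real.sqrt (N : ℝ) /
          (2 * (N : ℝ) - (Real.sqrt (2 * (N : ℝ)) * Real.cos τ) ^ 2) := by
  choose b hb using pr_small
  have hev : ∀ᶠ N : ℕ in atTop, 3 / C ≤ (N : ℝ) ^ ε :=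
    ((tendsto_rpow_atTop hε).comp tendsto_natCast_atTop_atTop).eventually_ge_atTop (3 / C)
  obtain ⟨N0, hN0⟩ := eventually_atTop.mp hev
  have hsum : 0 ≤ ∑ M ∈ Finset.range N0, 2 * (M : ℝ) * |b M| :=
    Finset.sum_nonneg fun M _ => by positivity
  refine ⟨20 + ∑ M ∈ Finset.range N0, 2 * (M : ℝ) * |b M|, by linarith, ?_⟩
  intro N hN τ h0 h1 h
  have hN1 : (1 : ℝ) ≤ N := by exact_mod_cast hN
  have hs0 : 0 < Real.sin τ := Real.sin_pos_of_pos_of_lt_pi h0 (by linarith [Real.pi_pos])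
  have hR2 : Real.sqrt (2 * (N : ℝ)) ^ 2 = 2 * N := Real.sq_sqrt (by positivity)
  have hR0 : 0 < Real.sqrt (2 * (N : ℝ)) := by positivity
  have hcs := Real.sin_sq_add_cos_sq τ
  have hyp : 2 * (N : ℝ) - (Real.sqrt (2 * (N : ℝ)) * Real.cos τ) ^ 2 =
      (Real.sqrt (2 * (N : ℝ)) * Real.sin τ) ^ 2 := by
    rw [mul_pow, mul_pow, hR2]; linear_combination (-(2 * (N : ℝ))) * hcs
  rcases lt_or_ge N N0 with hlt | hge
  · refine (hb N τ).trans ?_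
    have hle : 2 * (N : ℝ) * |b N| ≤ ∑ M ∈ Finset.range N0, 2 * (M : ℝ) * |b M| :=
      Finset.single_le_sum (f := fun M : ℕ => 2 * (M : ℝ) * |b M|)
        (fun M _ => by positivity) (Finset.mem_range.mpr hlt)
    have hpos : 0 < 2 * (N : ℝ) - (Real.sqrt (2 * (N : ℝ)) * Real.cos τ) ^ 2 := by
      rw [hyp]; positivity
    rw [le_div_iff₀ hpos]
    have hsq : 1 ≤ Real.sqrt (N : ℝ) := Real.one_le_sqrt.mpr hN1
    calc b N * (2 * (N : ℝ) - (Real.sqrt (2 * (N : ℝ)) * Real.cos τ) ^ 2)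
        ≤ |b N| * (2 * (N : ℝ)) := by
          gcongr
          · exact le_abs_self _
          · have := sq_nonneg (Real.sqrt (2 * (N : ℝ)) * Real.cos τ)
            linarith
      _ ≤ (20 + ∑ M ∈ Finset.range N0, 2 * (M : ℝ) * |b M|) * 1 := by linarith
      _ ≤ _ := by gcongr
  · have h3 : 3 ≤ (N : ℝ) * Real.sin τ ^ 3 := by
      have := hN0 N hge
      rw [div_le_iff₀ hC] at this
      linarith
    obtain ⟨n, rfl⟩ : ∃ n, N = n + 1 := ⟨N - 1, by omega⟩
    have hl := pr_large n τ h0 h1 (by exact_mod_cast h3)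
    rw [hyp, Real.sqrt_sq (by positivity)]
    push_cast
    refine hl.trans ?_
    gcongr
    linarith
end

section
/- Uniform kernel bound away from the spectral edges: fix α with −2/3 < α < −1/2 and set B^N = (−√2 − N^α, −√2 + N^α) ∪ (√2 − N^α, √2 + N^α) and U^N = ℝ \ B^N. Then there exists a constant c > 0 such that for every integer N ≥ 1 and all x, y ∈ U^N, |L^N(x,y)| ≤ c. -/
open Real MeasureTheory Filter Set

/-- The edge neighborhood `B^N`. -/
noncomputable def Bedge (α : ℝ) (N : ℕ) : Set ℝ :=
  Set.Ioo (-Real.sqrt 2 - (N : ℝ) ^ α) (-Real.sqrt 2 + (N : ℝ) ^ α) ∪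
    Set.Ioo (Real.sqrt 2 - (N : ℝ) ^ α) (Real.sqrt 2 + (N : ℝ) ^ α)

open Polynomial in
/-- Physicists' Hermite polynomials as actual polynomials. -/
noncomputable def hP : ℕ → Polynomial ℝ
  | 0 => 1
  | n + 1 => 2 * Polynomial.X * hP n - Polynomial.derivative (hP n)

lemma hP_succ (n : ℕ) :
    hP (n + 1) = 2 * Polynomial.X * hP n - Polynomial.derivative (hP n) := rfl

lemma hP_deriv (n : ℕ) :
    Polynomial.derivative (hP (n + 1)) = Polynomial.C (2 * ((n : ℝ) + 1)) * hP n := by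
  induction n with
  | zero => simp [hP, map_ofNat]
  | succ n ih =>
    have h2 := ih
    rw [hP_succ (n + 1)]
    simp only [Polynomial.derivative_sub, Polynomial.derivative_mul, ih, Polynomial.derivative_X,
      Polynomial.derivative_ofNat, Polynomial.derivative_C]
    rw [hP_succ n]
    simp only [map_mul, map_add, Polynomial.C_1, map_ofNat, Nat.cast_add, Nat.cast_one]
    ring

lemma hasDerivAt_gauss (p : Polynomial ℝ) (x : ℝ) :
    HasDerivAt (fun t => p.eval t * Real.exp (-t ^ 2))
      ((Polynomial.derivative p - 2 * Polynomial.X * p).eval x * Real.exp (-x ^ 2)) x := by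
  have h1 := p.hasDerivAt x
  have h2 : HasDerivAt (fun t : ℝ => Real.exp (-t ^ 2)) (Real.exp (-x ^ 2) * (-(2 * x))) x := by
    have := ((hasDerivAt_pow 2 x).fun_neg).exp
    convert this using 1
    simp
  refine (h1.fun_mul h2).congr_deriv ?_
  rw [Polynomial.eval_sub, Polynomial.eval_mul, Polynomial.eval_mul, Polynomial.eval_X,
    Polynomial.eval_ofNat]
  ring

lemma iter_gauss (n : ℕ) :
    iteratedDeriv n (fun t : ℝ => Real.exp (-t ^ 2)) =
      fun x => (-1 : ℝ) ^ n * ((hP n).eval x * Real.exp (-x ^ 2)) := by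
  induction n with
  | zero => simp [hP]
  | succ n ih =>
    rw [iteratedDeriv_succ, ih]
    funext x
    rw [((hasDerivAt_gauss (hP n) x).const_mul _).deriv, hP_succ]
    simp
    ring

lemma hermiteP_eq (n : ℕ) (x : ℝ) : hermiteP n x = (hP n).eval x := by
  unfold hermiteP
  rw [iter_gauss]
  have h : Real.exp (x ^ 2) * Real.exp (-x ^ 2) = 1 := by
    rw [← Real.exp_add]; simp
  have h1 : (-1 : ℝ) ^ n * (-1 : ℝ) ^ n = 1 := by
    rw [← mul_pow]; simp
  calc _ = ((-1 : ℝ) ^ n * (-1 : ℝ) ^ n) * (Real.exp (x ^ 2) * Real.exp (-x ^ 2)) *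
      (hP n).eval x := by ring
    _ = _ := by rw [h, h1]; ring

lemma integrable_gauss (p : Polynomial ℝ) :
    Integrable (fun t : ℝ => p.eval t * Real.exp (-t ^ 2)) := by
  induction p using Polynomial.induction_on' with
  | add p q hp hq =>
    refine (hp.add hq).congr (Eventually.of_forall fun t => ?_)
    simp [add_mul]
  | monomial n a =>
    have h := (integrable_rpow_mul_exp_neg_mul_sq (b := 1) one_pos (s := (n : ℝ))
      (by have : (0 : ℝ) ≤ n := n.cast_nonneg
          linarith)).const_mul a
    refine h.congr (Eventually.of_forall fun t => ?_)
    simp [mul_assoc]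

/-- Normalizing constant. -/
noncomputable def nc (n : ℕ) : ℝ := Real.sqrt Real.pi * 2 ^ n * (n.factorial : ℝ)

lemma nc_pos (n : ℕ) : 0 < nc n := by unfold nc; positivity

lemma nc_succ (n : ℕ) : nc (n + 1) = 2 * ((n : ℝ) + 1) * nc n := by
  unfold nc
  rw [Nat.factorial_succ]; push_cast; ring

lemma integral_hP (n : ℕ) : ∫ t : ℝ, ((hP n) ^ 2).eval t * Real.exp (-t ^ 2) = nc n := by
  induction n with
  | zero =>
    have := integral_gaussian 1
    simpa [hP, nc] using this
  | succ n ih =>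
    have h := integral_eq_zero_of_hasDerivAt_of_integrable
      (fun x => hasDerivAt_gauss (hP n * hP (n + 1)) x)
      (integrable_gauss _) (integrable_gauss _)
    have e : Polynomial.derivative (hP n * hP (n + 1)) - 2 * Polynomial.X * (hP n * hP (n + 1))
        = Polynomial.C (2 * ((n : ℝ) + 1)) * hP n ^ 2 - hP (n + 1) ^ 2 := by
      rw [Polynomial.derivative_mul, hP_deriv]
      have : Polynomial.derivative (hP n) = 2 * Polynomial.X * hP n - hP (n + 1) := by
        rw [hP_succ]; ring
      rw [this]; ring
    rw [e] at h
    have h2 : ∫ t : ℝ, (2 * ((n : ℝ) + 1) * (((hP n) ^ 2).eval t * Real.exp (-t ^ 2))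
        - ((hP (n + 1)) ^ 2).eval t * Real.exp (-t ^ 2)) = 0 := by
      rw [← h]
      congr 1
      funext t
      simp
      ring
    rw [integral_sub ((integrable_gauss _).const_mul _) (integrable_gauss _),
      integral_const_mul, ih] at h2
    rw [nc_succ]; linarith

/-- Diagonal kernel polynomial. -/
noncomputable def kP (N : ℕ) : Polynomial ℝ :=
  ∑ k ∈ Finset.range N, Polynomial.C (nc k)⁻¹ * hP k ^ 2

lemma kP_deriv (N : ℕ) :
    Polynomial.derivative (kP (N + 1)) - 2 * Polynomial.X * kP (N + 1) =
      - (Polynomial.C (nc N)⁻¹ * (hP (N + 1) * hP N)) := by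
  induction N with
  | zero =>
    simp [kP, hP]; ring
  | succ N ih =>
    have e : kP (N + 1 + 1) = kP (N + 1) + Polynomial.C (nc (N + 1))⁻¹ * hP (N + 1) ^ 2 := by
      simp [kP, Finset.sum_range_succ]
    have hc : (nc N)⁻¹ = 2 * ((N : ℝ) + 1) * (nc (N + 1))⁻¹ := by
      rw [nc_succ]
      have := nc_pos N
      field_simp
    rw [hP_succ (N + 1), e]
    rw [hc, Polynomial.C_mul] at ih
    simp only [Polynomial.derivative_add, Polynomial.derivative_mul, Polynomial.derivative_C,
      Polynomial.derivative_pow, hP_deriv]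
    simp only [Nat.cast_ofNat, map_ofNat, Nat.add_one_sub_one, pow_one]
    linear_combination ih

lemma kP_bound (N : ℕ) (x : ℝ) :
    (kP (N + 1)).eval x * Real.exp (-x ^ 2) ≤ Real.sqrt (2 * ((N : ℝ) + 1)) := by
  have hd := fun x => hasDerivAt_gauss (kP (N + 1)) x
  have hlim : Tendsto (fun t => (kP (N + 1)).eval t * Real.exp (-t ^ 2)) atTop (nhds 0) :=
    tendsto_zero_of_hasDerivAt_of_integrableOn_Ioi (a := x) (fun t _ => hd t)
      (integrable_gauss _).integrableOn (integrable_gauss _).integrableOn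
  have hI := integral_Ioi_of_hasDerivAt_of_tendsto' (a := x) (fun t _ => hd t)
      (integrable_gauss _).integrableOn hlim
  set s := Real.sqrt (2 * ((N : ℝ) + 1)) with hs
  have hs0 : 0 < s := by rw [hs]; positivity
  have hs2 : s ^ 2 = 2 * ((N : ℝ) + 1) := by rw [hs]; exact Real.sq_sqrt (by positivity)
  set q : ℝ → ℝ := fun t => s / 2 * ((nc (N + 1))⁻¹ * (((hP (N + 1)) ^ 2).eval t * Real.exp (-t ^ 2))
    + (nc N)⁻¹ * (((hP N) ^ 2).eval t * Real.exp (-t ^ 2))) with hq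
  have hqi : Integrable q :=
    (((integrable_gauss _).const_mul _).add ((integrable_gauss _).const_mul _)).const_mul _
  have hc : (nc N)⁻¹ = s ^ 2 * (nc (N + 1))⁻¹ := by
    rw [hs2, nc_succ]
    have := nc_pos N
    field_simp
  have hcp : 0 < (nc (N + 1))⁻¹ := inv_pos.2 (nc_pos _)
  have hq0 : ∀ t, 0 ≤ q t := fun t => by
    have := nc_pos N
    simp only [hq, Polynomial.eval_pow]
    positivity
  have hqint : ∫ t, q t = s := by
    simp only [hq]
    rw [integral_const_mul, integral_add ((integrable_gauss _).const_mul _)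
      ((integrable_gauss _).const_mul _), integral_const_mul, integral_const_mul,
      integral_hP, integral_hP, inv_mul_cancel₀ (nc_pos _).ne', inv_mul_cancel₀ (nc_pos _).ne']
    ring
  have hle : ∀ t, -((Polynomial.derivative (kP (N + 1)) -
      2 * Polynomial.X * kP (N + 1)).eval t * Real.exp (-t ^ 2)) ≤ q t := fun t => by
    rw [kP_deriv]
    simp only [hq, hc, Polynomial.eval_neg, Polynomial.eval_mul, Polynomial.eval_C,
      Polynomial.eval_pow]
    have he := Real.exp_pos (-t ^ 2)
    set A := (hP (N + 1)).eval t
    set B := (hP N).eval t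
    have : 0 ≤ s / 2 * (nc (N + 1))⁻¹ * Real.exp (-t ^ 2) * (A - s * B) ^ 2 := by positivity
    nlinarith [this]
  calc _ = ∫ t in Ioi x, -((Polynomial.derivative (kP (N + 1)) -
      2 * Polynomial.X * kP (N + 1)).eval t * Real.exp (-t ^ 2)) := by
        rw [integral_neg, hI]; ring
    _ ≤ ∫ t in Ioi x, q t := by
        refine integral_mono ?_ hqi.integrableOn hle
        exact (integrable_gauss (Polynomial.derivative (kP (N + 1)) -
          2 * Polynomial.X * kP (N + 1))).neg.integrableOn
    _ ≤ ∫ t, q t := setIntegral_le_integral hqi (Eventually.of_forall hq0)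
    _ = s := hqint

lemma osc_sq (n : ℕ) (x : ℝ) :
    osc n x ^ 2 = (nc n)⁻¹ * (hP n).eval x ^ 2 * Real.exp (-x ^ 2) := by
  unfold osc
  rw [hermiteP_eq, mul_pow, mul_pow, inv_pow, ← nc, Real.sq_sqrt (nc_pos n).le, ← Real.exp_nat_mul]
  have : ((2 : ℕ) : ℝ) * (-x ^ 2 / 2) = -x ^ 2 := by push_cast; ring
  rw [this]; ring

lemma sum_osc_sq (N : ℕ) (hN : 1 ≤ N) (x : ℝ) :
    ∑ k ∈ Finset.range N, osc k x ^ 2 ≤ Real.sqrt (2 * N) := by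
  obtain ⟨M, rfl⟩ : ∃ M, N = M + 1 := ⟨N - 1, by omega⟩
  have h := kP_bound M x
  push_cast
  refine le_trans (le_of_eq ?_) h
  simp only [kP, Polynomial.eval_finsetSum, Finset.sum_mul, osc_sq, Polynomial.eval_mul,
    Polynomial.eval_C, Polynomial.eval_pow]

/-- Uniform kernel bound away from the spectral edges. -/
theorem kernel_bound_away_from_edges (α : ℝ) (hα1 : -2/3 < α) (hα2 : α < -1/2) :
    ∃ c : ℝ, 0 < c ∧ ∀ N : ℕ, 1 ≤ N → ∀ x y : ℝ,
      x ∈ Set.univ \ Bedge α N → y ∈ Set.univ \ Bedge α N → |kerL N x y| ≤ c := by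
  refine ⟨Real.sqrt 2, by positivity, fun N hN x y _ _ => ?_⟩
  have key : ∀ u v : ℝ, |kerK N u v| ≤ Real.sqrt (2 * N) := fun u v => by
    unfold kerK
    have h := Finset.sum_mul_sq_le_sq_mul_sq (Finset.range N) (fun k => osc k u) (fun k => osc k v)
    apply abs_le_of_sq_le_sq _ (Real.sqrt_nonneg _)
    refine h.trans ?_
    rw [sq (Real.sqrt _)]
    exact mul_le_mul (sum_osc_sq N hN u) (sum_osc_sq N hN v)
      (Finset.sum_nonneg fun _ _ => sq_nonneg _) (Real.sqrt_nonneg _)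
  have hNp : 0 < Real.sqrt (N : ℝ) := Real.sqrt_pos.2 (by exact_mod_cast hN)
  unfold kerL
  rw [abs_mul, abs_of_pos (inv_pos.2 hNp), inv_mul_le_iff₀ hNp]
  refine (key _ _).trans (le_of_eq ?_)
  rw [Real.sqrt_mul (by norm_num), mul_comm]
end
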